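/- Let Γ be a terminal DG game with exactly 3 terminals in which some terminal is reachable from the initial position v₀ by a directed path, and which has no terminal Nash equilibrium. Suppose Γ is a minimal such counter-example, i.e., every terminal DG game with at most 3 terminals, in which some terminal is reachable from its initial position, and which has either strictly fewer positions than Γ, or the same number of positions and strictly fewer moves than Γ, has a terminal Nash equilibrium. Then every move (u,a) ∈ E of Γ with a ∈ T is a #2-move, i.e., a is the second-best outcome in A according to ≻_{i(u)}. -/

import Mathlib

/-!
Fix a move `(u, a)` to a terminal `a`, and let `i` be the owner of `u`.

* If it is the only move from `u`, then `u ≠ init` (otherwise every situation has outcome `a` and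
  is a terminal equilibrium), and `u` can be contracted into `a`. The smaller game `contract`
  has a terminal equilibrium by minimality, and `exists_terminalNE_of_contract` lifts it to `Γ`.
* If `a` is the best outcome of `i`, delete all other moves from `u`. A terminal equilibrium of the
  remaining game is one of `Γ`: a profitable deviation of `i` in `Γ` either avoids `u`, or can be
  replaced by one that moves from `u` to `a`, which is at least as good.
* If `a` is the worst terminal of `i`, delete the move `(u, a)`. If a terminal is still reachable,
  a terminal equilibrium of the remaining game is one of `Γ`, since the restored move can only
  give `i` his worst terminal. Otherwise `a` is the only reachable terminal of `Γ`, and every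
  situation with outcome `a` is an equilibrium.

With exactly three terminals, being neither the best nor the worst of them means being second best.
-/

open Classical

/-- A deterministic graphical (DG) game on vertex (position) set `V` with player set `ι`.
`adj` is the move relation of the digraph; terminals are exactly the vertices of
out-degree `0`.  `owner x` is the player controlling position `x` (irrelevant for
terminals), `init` is the initial position, and `pref i x y` means that player `i`
strictly prefers outcome `x` to outcome `y`, where outcomes are encoded as
`Option V`: `some t` for a terminal `t` and `none` for the infinite outcome `∞`. -/
structure DGGame (V : Type*) (ι : Type*) where
  adj : V → V → Prop
  owner : V → ι
  init : V
  pref : ι → Option V → Option V → Prop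

namespace DGGame

variable {V ι : Type*} (Γ : DGGame V ι)

/-- A terminal position: no outgoing moves. -/
def Terminal (x : V) : Prop := ∀ y, ¬ Γ.adj x y

/-- The set of outcomes `A = T ∪ {∞}`. -/
def OutcomeSet : Set (Option V) := {x | x = none ∨ ∃ t, Γ.Terminal t ∧ x = some t}

/-- The preferences of each player form a strict linear order on the outcome set. -/
def PrefOrder : Prop :=
  ∀ i : ι,
    (∀ x ∈ Γ.OutcomeSet, ¬ Γ.pref i x x) ∧
    (∀ x ∈ Γ.OutcomeSet, ∀ y ∈ Γ.OutcomeSet, ∀ z ∈ Γ.OutcomeSet,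
        Γ.pref i x y → Γ.pref i y z → Γ.pref i x z) ∧
    (∀ x ∈ Γ.OutcomeSet, ∀ y ∈ Γ.OutcomeSet, x ≠ y → Γ.pref i x y ∨ Γ.pref i y x)

/-- One step of the play determined by a situation `σ` (stays put at terminals). -/
noncomputable def step (σ : V → V) (x : V) : V :=
  if Γ.Terminal x then x else σ x

/-- The position reached after `n` moves of the play starting at the initial position. -/
noncomputable def iter (σ : V → V) (n : ℕ) : V := (Γ.step σ)^[n] Γ.init

/-- The outcome `g(σ)` of a situation: the terminal at which the play from the initial
position ends, or `none` (i.e. `∞`) if the play is infinite. -/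
noncomputable def outcome (σ : V → V) : Option V :=
  if h : ∃ n, Γ.Terminal (Γ.iter σ n) then some (Γ.iter σ (Nat.find h)) else none

/-- A situation: a choice, for every non-terminal position, of a move from it.
(Values at terminal positions are irrelevant.) -/
def IsSituation (σ : V → V) : Prop := ∀ x, ¬ Γ.Terminal x → Γ.adj x (σ x)

/-- Nash equilibrium in pure stationary strategies: no player `i` can obtain a strictly
better outcome by changing his own moves only. -/
def IsNE (σ : V → V) : Prop :=
  Γ.IsSituation σ ∧
  ∀ (i : ι) (σ' : V → V), Γ.IsSituation σ' →
    (∀ x, Γ.owner x ≠ i → σ' x = σ x) →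
    ¬ Γ.pref i (Γ.outcome σ') (Γ.outcome σ)

/-- A terminal Nash equilibrium: a NE whose outcome is a terminal. -/
def IsTerminalNE (σ : V → V) : Prop := Γ.IsNE σ ∧ ∃ t, Γ.outcome σ = some t

/-- A non-terminal Nash equilibrium: a NE whose outcome is `∞`. -/
def IsNonterminalNE (σ : V → V) : Prop := Γ.IsNE σ ∧ Γ.outcome σ = none

/-- A terminal DG game: every player prefers every terminal outcome to `∞`. -/
def TerminalGame : Prop := ∀ (i : ι) (t : V), Γ.Terminal t → Γ.pref i (some t) none

/-- A play-once DG game: every player controls exactly one position. -/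
def PlayOnce : Prop := ∀ i : ι, {x | ¬ Γ.Terminal x ∧ Γ.owner x = i}.ncard = 1

/-- Reachability by a directed path. -/
def Reaches (x y : V) : Prop := Relation.ReflTransGen Γ.adj x y

end DGGame

namespace DGGame

variable {V ι : Type*}

/-- The set of moves of the game, as a set of ordered pairs. -/
def moveSet (Γ : DGGame V ι) : Set (V × V) := {p | Γ.adj p.1 p.2}

/-- `x` is the second-best outcome for player `i`: it is an outcome, and exactly one
outcome is strictly better than it. -/
def IsSecondBest (Γ : DGGame V ι) (i : ι) (x : Option V) : Prop :=
  x ∈ Γ.OutcomeSet ∧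
  ∃ y ∈ Γ.OutcomeSet, Γ.pref i y x ∧
    ∀ z ∈ Γ.OutcomeSet, Γ.pref i z x → z = y

end DGGame

namespace DGGame

variable {V ι : Type*} (Γ : DGGame V ι)

/-! ### Plays as paths -/

/-- The play from `x` under `σ` visits `y`. -/
def Run (σ : V → V) (x y : V) : Prop :=
  Relation.ReflTransGen (fun p q => ¬ Γ.Terminal p ∧ σ p = q) x y

variable {Γ}

theorem run_iff_iter {σ : V → V} {t : V} : Γ.Run σ Γ.init t ↔ ∃ n, Γ.iter σ n = t := by
  constructor
  · intro h
    unfold Run at h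
    induction h with
    | refl => exact ⟨0, rfl⟩
    | tail _ hs ih =>
      obtain ⟨n, hn⟩ := ih
      refine ⟨n + 1, ?_⟩
      unfold iter at hn ⊢
      rw [Function.iterate_succ_apply', hn, step, if_neg hs.1, hs.2]
  · rintro ⟨n, rfl⟩
    induction n with
    | zero => exact Relation.ReflTransGen.refl
    | succ n ih =>
      unfold iter at ih ⊢
      rw [Function.iterate_succ_apply']
      by_cases h : Γ.Terminal ((Γ.step σ)^[n] Γ.init)
      · rw [step, if_pos h]; exact ih
      · exact Relation.ReflTransGen.tail ih ⟨h, by rw [step, if_neg h]⟩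

theorem iter_eq_of_terminal {σ : V → V} {n m : ℕ} (h : Γ.Terminal (Γ.iter σ n)) (hnm : n ≤ m) :
    Γ.iter σ m = Γ.iter σ n := by
  induction hnm with
  | refl => rfl
  | step _ ih =>
    unfold iter at ih h ⊢
    rw [Function.iterate_succ_apply', ih, step, if_pos h]

theorem outcome_eq_some {σ : V → V} {t : V} :
    Γ.outcome σ = some t ↔ Γ.Terminal t ∧ Γ.Run σ Γ.init t := by
  rw [run_iff_iter]
  unfold outcome
  constructor
  · intro h
    split_ifs at h with hex
    have hs := Nat.find_spec hex
    rw [Option.some.inj h] at hs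
    exact ⟨hs, _, Option.some.inj h⟩
  · rintro ⟨ht, n, rfl⟩
    have hex : ∃ n, Γ.Terminal (Γ.iter σ n) := ⟨n, ht⟩
    rw [dif_pos hex, iter_eq_of_terminal (Nat.find_spec hex) (Nat.find_min' hex ht)]

theorem outcome_mem (σ : V → V) : Γ.outcome σ ∈ Γ.OutcomeSet := by
  cases h : Γ.outcome σ with
  | none => exact Or.inl rfl
  | some t => exact Or.inr ⟨t, (outcome_eq_some.1 h).1, rfl⟩

theorem some_mem {t : V} (ht : Γ.Terminal t) : some t ∈ Γ.OutcomeSet := Or.inr ⟨t, ht, rfl⟩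

theorem Run.reaches {σ : V → V} (hσ : Γ.IsSituation σ) {x y : V} (h : Γ.Run σ x y) :
    Γ.Reaches x y := by
  unfold Run at h
  induction h with
  | refl => exact Relation.ReflTransGen.refl
  | tail _ hs ih => exact Relation.ReflTransGen.tail ih (hs.2 ▸ hσ _ hs.1)

/-- If two situations differ only at `u`, their plays agree until `u` is visited. -/
theorem Run.or_of_agree {σ τ : V → V} {u : V} (h : ∀ x, x ≠ u → τ x = σ x) {x z : V}
    (hr : Γ.Run σ x z) : Γ.Run τ x z ∨ Γ.Run τ x u := by
  unfold Run at hr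
  induction hr with
  | refl => exact Or.inl Relation.ReflTransGen.refl
  | @tail p q _ hs ih =>
    rcases ih with ih | ih
    · by_cases hp : p = u
      · exact Or.inr (hp ▸ ih)
      · exact Or.inl (Relation.ReflTransGen.tail ih ⟨hs.1, by rw [h p hp, hs.2]⟩)
    · exact Or.inr ih

theorem outcome_eq_of_not_run {σ τ : V → V} {u : V} (h : ∀ x, x ≠ u → τ x = σ x)
    (hu : ¬ Γ.Run σ Γ.init u) : Γ.outcome τ = Γ.outcome σ := by
  have h' : ∀ x, x ≠ u → σ x = τ x := fun x hx => (h x hx).symm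
  have hu' : ¬ Γ.Run τ Γ.init u := fun hr => hu ((hr.or_of_agree h').elim id id)
  ext t
  rw [outcome_eq_some, outcome_eq_some]
  exact and_congr_right fun _ => ⟨fun hr => (hr.or_of_agree h').resolve_right hu,
    fun hr => (hr.or_of_agree h).resolve_right hu'⟩

theorem isSituation_update {σ : V → V} (hσ : Γ.IsSituation σ) {x y : V} (h : Γ.adj x y) :
    Γ.IsSituation (Function.update σ x y) := by
  intro z hz
  by_cases hzx : z = x
  · subst hzx; simpa using h
  · rw [Function.update_of_ne hzx]; exact hσ z hz

/-- If the `σ`-play from `x` misses `t`, then a `σ`-play reaching `t` avoids `x`, so it survives a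
change of `σ` at `x`. -/
theorem Run.of_agree {σ τ : V → V} {x y t : V} (h : ∀ z, z ≠ x → τ z = σ z)
    (hx : ¬ Γ.Run σ x t) (hr : Γ.Run σ y t) : Γ.Run τ y t := by
  unfold Run at hr
  induction hr using Relation.ReflTransGen.head_induction_on with
  | refl => exact Relation.ReflTransGen.refl
  | @head z w hs hw ih =>
    have hzx : z ≠ x := fun e => hx (e ▸ Relation.ReflTransGen.head hs hw)
    exact Relation.ReflTransGen.head ⟨hs.1, by rw [h z hzx, hs.2]⟩ ih

/-- Every reachable position is visited by the play of some situation. -/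
theorem exists_situation_run {x t : V} (h : Γ.Reaches x t) :
    ∃ σ, Γ.IsSituation σ ∧ Γ.Run σ x t := by
  unfold Reaches at h
  induction h using Relation.ReflTransGen.head_induction_on with
  | refl =>
    have : ∀ x, ∃ y, ¬ Γ.Terminal x → Γ.adj x y := fun x => by
      by_cases hx : Γ.Terminal x
      · exact ⟨x, fun h => absurd hx h⟩
      · obtain ⟨y, hy⟩ := not_forall.1 hx
        exact ⟨y, fun _ => not_not.1 hy⟩
    choose σ hσ using this
    exact ⟨σ, hσ, Relation.ReflTransGen.refl⟩
  | @head x y hxy _ ih =>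
    obtain ⟨σ, hσ, hr⟩ := ih
    by_cases hx : Γ.Run σ x t
    · exact ⟨σ, hσ, hx⟩
    · exact ⟨Function.update σ x y, isSituation_update hσ hxy,
        Relation.ReflTransGen.head ⟨fun h => h y hxy, Function.update_self ..⟩
          (hr.of_agree (fun z hz => Function.update_of_ne hz _ _) hx)⟩

/-- If only one terminal can be an outcome, it is the outcome of an equilibrium. -/
theorem exists_terminalNE_of_unique (hpref : Γ.PrefOrder) (hterm : Γ.TerminalGame) {a : V}
    (ha : Γ.Terminal a) (hra : Γ.Reaches Γ.init a)
    (huniq : ∀ t, Γ.Terminal t → Γ.Reaches Γ.init t → t = a) :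
    ∃ σ, Γ.IsTerminalNE σ := by
  obtain ⟨σ, hσ, hr⟩ := exists_situation_run hra
  have hout : Γ.outcome σ = some a := outcome_eq_some.2 ⟨ha, hr⟩
  refine ⟨σ, ⟨hσ, fun i τ hτ _ hp => ?_⟩, a, hout⟩
  rw [hout] at hp
  obtain ⟨hirr, htrans, -⟩ := hpref i
  cases h : Γ.outcome τ with
  | none =>
    rw [h] at hp
    exact hirr none (Or.inl rfl) (htrans _ (Or.inl rfl) _ (some_mem ha) _ (Or.inl rfl) hp
      (hterm i a ha))
  | some t =>
    obtain ⟨ht, hrt⟩ := outcome_eq_some.1 h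
    rw [h, huniq t ht (hrt.reaches hτ)] at hp
    exact hirr _ (some_mem ha) hp

/-! ### Deleting moves -/

variable (Γ) in
/-- The game in which only the moves satisfying `K` are kept. -/
def restrict (K : V → V → Prop) : DGGame V ι :=
  { Γ with adj := fun x y => Γ.adj x y ∧ K x y }

theorem restrict_terminal {K : V → V → Prop}
    (hK : ∀ x, ¬ Γ.Terminal x → ∃ y, Γ.adj x y ∧ K x y) :
    (Γ.restrict K).Terminal = Γ.Terminal := by
  funext x
  refine propext ⟨fun h => ?_, fun h y hy => h y hy.1⟩
  by_contra hx
  obtain ⟨y, hy⟩ := hK x hx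
  exact h y hy

theorem restrict_outcome {K : V → V → Prop} (hT : (Γ.restrict K).Terminal = Γ.Terminal)
    (σ : V → V) : (Γ.restrict K).outcome σ = Γ.outcome σ := by
  ext t
  rw [outcome_eq_some, outcome_eq_some]
  unfold Run
  rw [hT]
  rfl

theorem restrict_prefOrder {K : V → V → Prop} (hT : (Γ.restrict K).Terminal = Γ.Terminal)
    (h : Γ.PrefOrder) : (Γ.restrict K).PrefOrder := by
  have hO : (Γ.restrict K).OutcomeSet = Γ.OutcomeSet := by
    unfold OutcomeSet; rw [hT]
  unfold PrefOrder
  rw [hO]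
  exact h

theorem restrict_ncard_lt [Finite V] {K : V → V → Prop} {u b : V} (hub : Γ.adj u b)
    (hb : ¬ K u b) : (Γ.restrict K).moveSet.ncard < Γ.moveSet.ncard :=
  Set.ncard_lt_ncard ⟨fun _ hp => hp.1, fun h => hb (h (show (u, b) ∈ Γ.moveSet from hub)).2⟩
    (Set.toFinite _)

/-- Deleting moves at `u` only: an equilibrium of the remaining game is one of the full game as soon
as every deviation `τ` of the owner of `u` that visits `u` by a deleted move is no improvement. -/
theorem IsTerminalNE.of_restrict {K : V → V → Prop} {u : V}
    (hT : (Γ.restrict K).Terminal = Γ.Terminal) (hu : ¬ Γ.Terminal u)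
    (hKu : ∀ x y, x ≠ u → K x y) {σ : V → V} (hσ : (Γ.restrict K).IsTerminalNE σ)
    (hdev : ∀ τ, Γ.IsSituation τ → (∀ x, Γ.owner x ≠ Γ.owner u → τ x = σ x) →
      Γ.Run τ Γ.init u → ¬ K u (τ u) → ¬ Γ.pref (Γ.owner u) (Γ.outcome τ) (Γ.outcome σ)) :
    Γ.IsTerminalNE σ := by
  obtain ⟨⟨hsit, hne⟩, t, ht⟩ := hσ
  have hsu := hsit u (hT ▸ hu)
  refine ⟨⟨fun x hx => (hsit x (hT ▸ hx)).1, fun i τ hτ hagree hp => ?_⟩, t,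
    (restrict_outcome hT σ) ▸ ht⟩
  simp only [restrict_outcome hT] at hne
  -- a situation using a kept move at `u` is a situation of the restricted game
  have key : ∀ τ, Γ.IsSituation τ → K u (τ u) → (Γ.restrict K).IsSituation τ := by
    intro τ hτ hk x hx
    rw [hT] at hx
    refine ⟨hτ x hx, ?_⟩
    by_cases hxu : x = u
    · subst hxu; exact hk
    · exact hKu _ _ hxu
  by_cases hk : K u (τ u)
  · exact hne i τ (key τ hτ hk) hagree hp
  have hi : Γ.owner u = i := by
    by_contra hi
    exact hk (hagree u hi ▸ hsu.2)
  subst hi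
  by_cases hr : Γ.Run τ Γ.init u
  · exact hdev τ hτ hagree hr hk hp
  · refine hne (Γ.owner u) (Function.update τ u (σ u))
      (key _ (isSituation_update hτ hsu.1) (by simpa using hsu.2)) (fun x hx => ?_) ?_
    · have hxu : x ≠ u := fun e => hx (by rw [e]; rfl)
      rw [Function.update_of_ne hxu]
      exact hagree x hx
    · rw [outcome_eq_of_not_run (fun x hx => Function.update_of_ne hx _ _) hr]
      exact hp

/-! ### Contracting a forced move -/

/-- The map contracting `u` to `a`. -/
noncomputable def squash {u a : V} (hau : a ≠ u) (z : V) : {x : V // x ≠ u} :=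
  if h : z = u then ⟨a, hau⟩ else ⟨z, h⟩

theorem squash_of_ne {u a : V} (hau : a ≠ u) {z : V} (h : z ≠ u) : squash hau z = ⟨z, h⟩ :=
  dif_neg h

theorem squash_self {u a : V} (hau : a ≠ u) : squash hau u = ⟨a, hau⟩ := dif_pos rfl

variable (Γ) in
/-- The game obtained by removing the position `u` and redirecting all moves into `u` to `a`. -/
def contract {u : V} (a : V) (hu : Γ.init ≠ u) : DGGame {x : V // x ≠ u} ι where
  adj x y := Γ.adj x y ∨ (Γ.adj x u ∧ y.1 = a)
  owner x := Γ.owner x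
  init := ⟨Γ.init, hu⟩
  pref i o o' := Γ.pref i (o.map Subtype.val) (o'.map Subtype.val)

section contract

variable {u a : V} (hu : Γ.init ≠ u) (hau : a ≠ u)

theorem contract_adj_squash {x : {x : V // x ≠ u}} {y : V} (h : Γ.adj x y) :
    (Γ.contract a hu).adj x (squash hau y) := by
  by_cases hy : y = u
  · subst hy; rw [squash_self]; exact Or.inr ⟨h, rfl⟩
  · rw [squash_of_ne hau hy]; exact Or.inl h

theorem contract_terminal (hau : a ≠ u) (x : {x : V // x ≠ u}) :
    (Γ.contract a hu).Terminal x ↔ Γ.Terminal x := by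
  constructor
  · intro h y hy
    exact h _ (contract_adj_squash hu hau hy)
  · rintro h y (hy | hy)
    · exact h _ hy
    · exact h _ hy.1

theorem contract_mem (hau : a ≠ u) {o : Option {x : V // x ≠ u}}
    (h : o ∈ (Γ.contract a hu).OutcomeSet) : o.map Subtype.val ∈ Γ.OutcomeSet := by
  rcases h with rfl | ⟨t, ht, rfl⟩
  · exact Or.inl rfl
  · exact Or.inr ⟨t, (contract_terminal hu hau t).1 ht, rfl⟩

theorem contract_prefOrder (hau : a ≠ u) (h : Γ.PrefOrder) : (Γ.contract a hu).PrefOrder := by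
  intro i
  obtain ⟨h1, h2, h3⟩ := h i
  refine ⟨fun x hx => h1 _ (contract_mem hu hau hx), fun x hx y hy z hz =>
    h2 _ (contract_mem hu hau hx) _ (contract_mem hu hau hy) _ (contract_mem hu hau hz),
    fun x hx y hy hxy => h3 _ (contract_mem hu hau hx) _ (contract_mem hu hau hy) fun e =>
      hxy (Option.map_injective Subtype.val_injective e)⟩

theorem contract_reaches (hu1 : ∀ y, Γ.adj u y → y = a) {z : V}
    (h : Γ.Reaches Γ.init z) : (Γ.contract a hu).Reaches ⟨Γ.init, hu⟩ (squash hau z) := by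
  unfold Reaches at h
  induction h with
  | refl => rw [squash_of_ne hau hu]; exact Relation.ReflTransGen.refl
  | @tail p q _ hs ih =>
    by_cases hp : p = u
    · subst hp
      rw [squash_self] at ih
      rw [hu1 q hs, squash_of_ne hau hau]
      exact ih
    · rw [squash_of_ne hau hp] at ih
      exact Relation.ReflTransGen.tail ih (contract_adj_squash hu hau (x := ⟨p, hp⟩) hs)

/-- Contraction does not change outcomes, when `a` is forced at `u` and `τ'` is the contracted
version of `τ`. -/
theorem contract_outcome (hua : Γ.adj u a) (hu1 : ∀ y, Γ.adj u y → y = a) {τ : V → V}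
    (hτ : Γ.IsSituation τ) {τ' : {x : V // x ≠ u} → {x : V // x ≠ u}}
    (hττ : ∀ x : {x : V // x ≠ u}, ¬ Γ.Terminal x → τ' x = squash hau (τ x)) :
    Γ.outcome τ = ((Γ.contract a hu).outcome τ').map Subtype.val := by
  have hun : ¬ Γ.Terminal u := fun h => h a hua
  have hτu : τ u = a := hu1 _ (hτ u hun)
  have h1 : ∀ z, Γ.Run τ Γ.init z →
      (Γ.contract a hu).Run τ' (Γ.contract a hu).init (squash hau z) := by
    intro z h
    unfold Run at h
    induction h with
    | refl => rw [squash_of_ne hau hu]; exact Relation.ReflTransGen.refl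
    | @tail p q _ hs ih =>
      by_cases hp : p = u
      · subst hp
        rw [squash_self] at ih
        rw [← hs.2, hτu, squash_of_ne hau hau]
        exact ih
      · rw [squash_of_ne hau hp] at ih
        exact Relation.ReflTransGen.tail ih
          ⟨fun h => hs.1 ((contract_terminal hu hau _).1 h), by rw [hττ _ hs.1, hs.2]⟩
  have h2 : ∀ z, (Γ.contract a hu).Run τ' (Γ.contract a hu).init z → Γ.Run τ Γ.init z := by
    intro z h
    unfold Run at h
    induction h with
    | refl => exact Relation.ReflTransGen.refl
    | @tail p q _ hs ih =>
      have hp : ¬ Γ.Terminal p := fun h => hs.1 ((contract_terminal hu hau _).2 h)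
      have hq := hs.2
      rw [hττ p hp] at hq
      by_cases hpu : τ p = u
      · rw [hpu, squash_self] at hq
        rw [← hq]
        exact Relation.ReflTransGen.tail (Relation.ReflTransGen.tail ih ⟨hp, hpu⟩) ⟨hun, hτu⟩
      · rw [squash_of_ne hau hpu] at hq
        rw [← hq]
        exact Relation.ReflTransGen.tail ih ⟨hp, rfl⟩
  ext t
  rw [Option.map_eq_some_iff, outcome_eq_some]
  constructor
  · rintro ⟨ht, hr⟩
    have htu : t ≠ u := fun e => hun (e ▸ ht)
    refine ⟨⟨t, htu⟩, outcome_eq_some.2 ⟨(contract_terminal hu hau _).2 ht, ?_⟩, rfl⟩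
    simpa [squash_of_ne hau htu] using h1 t hr
  · rintro ⟨t', ht', rfl⟩
    obtain ⟨ht, hr⟩ := outcome_eq_some.1 ht'
    exact ⟨(contract_terminal hu hau _).1 ht, h2 _ hr⟩

theorem exists_terminalNE_of_contract (hau : a ≠ u) (hua : Γ.adj u a)
    (hu1 : ∀ y, Γ.adj u y → y = a)
    {σ' : {x : V // x ≠ u} → {x : V // x ≠ u}} (h : (Γ.contract a hu).IsTerminalNE σ') :
    ∃ σ, Γ.IsTerminalNE σ := by
  obtain ⟨⟨hsit, hne⟩, t, ht⟩ := h
  -- a move to `a` in the contracted game lifts to a move to `a` if there is one, else to `u`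
  let σ : V → V := fun x => if h : x = u then a else
    if Γ.adj x (σ' ⟨x, h⟩) then σ' ⟨x, h⟩ else u
  have hmove : ∀ x : {x : V // x ≠ u}, ¬ Γ.Terminal x →
      Γ.adj x (σ x) ∧ σ' x = squash hau (σ x) := by
    rintro ⟨x, hx⟩ hnt
    have hs := hsit ⟨x, hx⟩ (fun h => hnt ((contract_terminal hu hau _).1 h))
    simp only [σ, dif_neg hx]
    split_ifs with hadj
    · exact ⟨hadj, (squash_of_ne hau (σ' ⟨x, hx⟩).2).symm⟩
    · obtain ⟨h1, h2⟩ := hs.resolve_left hadj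
      exact ⟨h1, by rw [squash_self]; exact Subtype.ext h2⟩
  have hσ : Γ.IsSituation σ := by
    intro x hnt
    by_cases hx : x = u
    · subst hx; simpa [σ] using hua
    · exact (hmove ⟨x, hx⟩ hnt).1
  have hout := contract_outcome hu hau hua hu1 hσ (fun x hx => (hmove x hx).2)
  refine ⟨σ, ⟨hσ, fun i τ hτ hagree hp => ?_⟩, t, by rw [hout, ht]; rfl⟩
  let τ' : {x : V // x ≠ u} → {x : V // x ≠ u} := fun x =>
    if Γ.Terminal x then σ' x else squash hau (τ x)
  have hτ' : ∀ x : {x : V // x ≠ u}, ¬ Γ.Terminal x → τ' x = squash hau (τ x) :=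
    fun x hx => if_neg hx
  rw [hout, contract_outcome hu hau hua hu1 hτ hτ'] at hp
  refine hne i τ' (fun x hx => ?_) (fun x hx => ?_) hp
  · have hx' : ¬ Γ.Terminal x := fun h => hx ((contract_terminal hu hau _).2 h)
    rw [hτ' x hx']
    exact contract_adj_squash hu hau (hτ x hx')
  · by_cases hnt : Γ.Terminal x
    · exact if_pos hnt
    · rw [hτ' x hnt, hagree x hx, (hmove x hnt).2]

end contract

end DGGame

/-- Let `Γ` be a terminal DG game with exactly 3 terminals, in which some terminal is
reachable from the initial position, having no terminal Nash equilibrium, and which is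
a minimal such counter-example: every terminal DG game with at most 3 terminals and a
terminal reachable from its initial position that has either strictly fewer positions,
or the same number of positions and strictly fewer moves, has a terminal Nash
equilibrium.  Then every move `(u,a)` of `Γ` with `a ∈ T` is a `#2`-move, i.e. `a` is
the second-best outcome of player `i(u)` in `A = T ∪ {∞}`. -/
theorem stmt10 {V : Type u} {ι : Type v} [Finite V] (Γ : DGGame V ι)
    (hinit : ¬ Γ.Terminal Γ.init) (hpref : Γ.PrefOrder)
    (hterm : Γ.TerminalGame)
    (hT3 : {x | Γ.Terminal x}.ncard = 3)
    (hreach : ∃ t, Γ.Terminal t ∧ Γ.Reaches Γ.init t)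
    (hnoNE : ¬ ∃ σ : V → V, Γ.IsTerminalNE σ)
    (hmin : ∀ (V' : Type u) (ι' : Type v) [Finite V'] (Γ' : DGGame V' ι'),
      ¬ Γ'.Terminal Γ'.init → Γ'.PrefOrder → Γ'.TerminalGame →
      {x | Γ'.Terminal x}.ncard ≤ 3 →
      (∃ t, Γ'.Terminal t ∧ Γ'.Reaches Γ'.init t) →
      (Nat.card V' < Nat.card V ∨
        (Nat.card V' = Nat.card V ∧ Γ'.moveSet.ncard < Γ.moveSet.ncard)) →
      ∃ σ : V' → V', Γ'.IsTerminalNE σ) :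
    ∀ u a, Γ.adj u a → Γ.Terminal a → Γ.IsSecondBest (Γ.owner u) (some a) := by
  intro u a hua ha
  have hun : ¬ Γ.Terminal u := fun h => h a hua
  have hau : a ≠ u := fun e => hun (e ▸ ha)
  obtain ⟨t₀, ht₀, hrt₀⟩ := hreach
  have hbranch : ∃ b, Γ.adj u b ∧ b ≠ a := by
    by_contra hcon
    have hu1 : ∀ y, Γ.adj u y → y = a := fun y hy => by
      by_contra hya
      exact hcon ⟨y, hy, hya⟩
    by_cases hu : Γ.init = u
    · refine hnoNE (DGGame.exists_terminalNE_of_unique hpref hterm ha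
        (hu ▸ Relation.ReflTransGen.single hua) fun t ht hr => ?_)
      rcases Relation.ReflTransGen.cases_head hr with e | ⟨y, hy, hyt⟩
      · exact absurd (e ▸ ht) hinit
      · rw [hu] at hy
        rw [hu1 y hy] at hyt
        rcases Relation.ReflTransGen.cases_head hyt with e | ⟨z, hz, -⟩
        · exact e.symm
        · exact absurd hz (ha z)
    · have hcard : Nat.card {x : V // x ≠ u} < Nat.card V :=
        Finite.card_subtype_lt (x := u) (by simp)
      obtain ⟨σ', hσ'⟩ := hmin {x : V // x ≠ u} ι (Γ.contract a hu)
        (fun h => hinit ((DGGame.contract_terminal hu hau _).1 h))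
        (DGGame.contract_prefOrder hu hau hpref)
        (fun i t ht => hterm i t ((DGGame.contract_terminal hu hau _).1 ht))
        (hT3 ▸ Set.ncard_le_ncard_of_injOn Subtype.val
          (fun x hx => (DGGame.contract_terminal hu hau x).1 hx)
          Subtype.val_injective.injOn (Set.toFinite _))
        ⟨_, (DGGame.contract_terminal hu hau ⟨t₀, fun e => hun (e ▸ ht₀)⟩).2 ht₀, by
          have h := DGGame.contract_reaches hu hau hu1 hrt₀
          rwa [DGGame.squash_of_ne hau (fun e => hun (e ▸ ht₀) : t₀ ≠ u)] at h⟩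
        (Or.inl hcard)
      exact hnoNE (DGGame.exists_terminalNE_of_contract hu hau hua hu1 hσ')
  obtain ⟨b, hub, hba⟩ := hbranch
  obtain ⟨hirr, htrans, htot⟩ := hpref (Γ.owner u)
  have hasymm : ∀ x ∈ Γ.OutcomeSet, ∀ y ∈ Γ.OutcomeSet, Γ.pref (Γ.owner u) x y →
      ¬ Γ.pref (Γ.owner u) y x := fun x hx y hy h h' => hirr x hx (htrans x hx y hy x hx h h')
  have haO : some a ∈ Γ.OutcomeSet := DGGame.some_mem ha
  have hnO : none ∈ Γ.OutcomeSet := Or.inl rfl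
  have hrestrict : ∀ K : V → V → Prop, (∀ x, ¬ Γ.Terminal x → ∃ y, Γ.adj x y ∧ K x y) →
      (∃ c, Γ.adj u c ∧ ¬ K u c) → (∃ t, Γ.Terminal t ∧ (Γ.restrict K).Reaches Γ.init t) →
      ∃ σ, (Γ.restrict K).IsTerminalNE σ := by
    rintro K hK ⟨c, hc, hKc⟩ hr
    have hT := DGGame.restrict_terminal hK
    refine hmin V ι (Γ.restrict K) (by rw [hT]; exact hinit)
      (DGGame.restrict_prefOrder hT hpref) ?_ ?_ ?_
      (Or.inr ⟨rfl, DGGame.restrict_ncard_lt hc hKc⟩)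
    · intro i t ht
      rw [hT] at ht
      exact hterm i t ht
    · rw [hT]; exact hT3.le
    · rw [hT]; exact hr
  have hnotbest : ∃ y ∈ Γ.OutcomeSet, Γ.pref (Γ.owner u) y (some a) := by
    by_contra hbest
    push Not at hbest
    let K : V → V → Prop := fun x y => x = u → y = a
    have hK : ∀ x, ¬ Γ.Terminal x → ∃ y, Γ.adj x y ∧ K x y := by
      intro x hx
      by_cases hxu : x = u
      · exact ⟨a, hxu ▸ hua, fun _ => rfl⟩
      · obtain ⟨y, hy⟩ := not_forall.1 hx
        exact ⟨y, not_not.1 hy, fun e => absurd e hxu⟩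
    have hT := DGGame.restrict_terminal hK
    have hr : ∀ z, Γ.Reaches Γ.init z →
        (Γ.restrict K).Reaches Γ.init z ∨ (Γ.restrict K).Reaches Γ.init u := by
      intro z h
      unfold DGGame.Reaches at h
      induction h with
      | refl => exact Or.inl Relation.ReflTransGen.refl
      | @tail p q _ hs ih =>
        rcases ih with ih | ih
        · by_cases hp : p = u
          · exact Or.inr (hp ▸ ih)
          · exact Or.inl (Relation.ReflTransGen.tail ih ⟨hs, fun e => absurd e hp⟩)
        · exact Or.inr ih
    obtain ⟨σ, hσ⟩ := hrestrict K hK ⟨b, hub, fun h => hba (h rfl)⟩ <| by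
      rcases hr t₀ hrt₀ with h | h
      · exact ⟨t₀, ht₀, h⟩
      · exact ⟨a, ha, Relation.ReflTransGen.tail h ⟨hua, fun _ => rfl⟩⟩
    refine hnoNE ⟨σ, hσ.of_restrict hT hun (fun x y hx e => absurd e hx)
      fun τ hτ hagree hrun _ hp => ?_⟩
    -- moving to `a` at `u` instead is a deviation within the restricted game
    have hagr : ∀ x, x ≠ u → Function.update τ u a x = τ x :=
      fun x hx => Function.update_of_ne hx _ _
    have hrun' : Γ.Run (Function.update τ u a) Γ.init u := (hrun.or_of_agree hagr).elim id id
    have hout : Γ.outcome (Function.update τ u a) = some a := DGGame.outcome_eq_some.2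
      ⟨ha, Relation.ReflTransGen.tail hrun' ⟨hun, Function.update_self ..⟩⟩
    have hsit := DGGame.isSituation_update hτ hua
    refine hσ.1.2 (Γ.owner u) (Function.update τ u a) (fun x hx => ?_) (fun x hx => ?_) ?_
    · rw [hT] at hx
      exact ⟨hsit x hx, fun e => by rw [e]; exact Function.update_self ..⟩
    · rw [hagr x fun e => hx (by rw [e]; rfl)]
      exact hagree x hx
    · rw [DGGame.restrict_outcome hT, DGGame.restrict_outcome hT, hout]
      by_cases he : Γ.outcome τ = some a
      · rw [he] at hp; exact hp
      · exact htrans _ haO _ (DGGame.outcome_mem τ) _ (DGGame.outcome_mem σ)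
          ((htot _ (DGGame.outcome_mem τ) _ haO he).resolve_left
            (hbest _ (DGGame.outcome_mem τ))) hp
  have hnotworst : ∃ s, Γ.Terminal s ∧ Γ.pref (Γ.owner u) (some a) (some s) := by
    by_contra hworst
    push Not at hworst
    let K : V → V → Prop := fun x y => x = u → y ≠ a
    have hK : ∀ x, ¬ Γ.Terminal x → ∃ y, Γ.adj x y ∧ K x y := by
      intro x hx
      by_cases hxu : x = u
      · exact ⟨b, hxu ▸ hub, fun _ => hba⟩
      · obtain ⟨y, hy⟩ := not_forall.1 hx
        exact ⟨y, not_not.1 hy, fun e => absurd e hxu⟩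
    have hT := DGGame.restrict_terminal hK
    by_cases hr : ∃ t, Γ.Terminal t ∧ (Γ.restrict K).Reaches Γ.init t
    · obtain ⟨σ, hσ⟩ := hrestrict K hK ⟨a, hua, fun h => h rfl rfl⟩ hr
      refine hnoNE ⟨σ, hσ.of_restrict hT hun (fun x y hx e => absurd e hx)
        fun τ hτ hagree hrun hk hp => ?_⟩
      have hτu : τ u = a := by
        by_contra hne
        exact hk fun _ => hne
      have hout : Γ.outcome τ = some a :=
        DGGame.outcome_eq_some.2 ⟨ha, Relation.ReflTransGen.tail hrun ⟨hun, hτu⟩⟩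
      obtain ⟨-, t, ht⟩ := hσ
      rw [DGGame.restrict_outcome hT] at ht
      rw [hout, ht] at hp
      exact hworst t (DGGame.outcome_eq_some.1 ht).1 hp
    · have hr' : ∀ z, Γ.Reaches Γ.init z → (Γ.restrict K).Reaches Γ.init z ∨ z = a := by
        intro z h
        unfold DGGame.Reaches at h
        induction h with
        | refl => exact Or.inl Relation.ReflTransGen.refl
        | @tail p q _ hs ih =>
          rcases ih with ih | ih
          · by_cases hq : q = a
            · exact Or.inr hq
            · exact Or.inl (Relation.ReflTransGen.tail ih ⟨hs, fun _ => hq⟩)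
          · exact absurd (ih ▸ hs) (ha q)
      have huniq : ∀ t, Γ.Terminal t → Γ.Reaches Γ.init t → t = a := fun t ht h =>
        (hr' t h).resolve_left fun h => hr ⟨t, ht, h⟩
      exact hnoNE (DGGame.exists_terminalNE_of_unique hpref hterm ha
        (huniq t₀ ht₀ hrt₀ ▸ hrt₀) huniq)
  obtain ⟨y, hyO, hya⟩ := hnotbest
  obtain ⟨s, hs, has⟩ := hnotworst
  have hsO : some s ∈ Γ.OutcomeSet := DGGame.some_mem hs
  have hbetter : ∀ z ∈ Γ.OutcomeSet, Γ.pref (Γ.owner u) z (some a) →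
      ∃ t, Γ.Terminal t ∧ z = some t ∧ t ≠ a ∧ t ≠ s := by
    rintro z hz hp
    rcases id hz with rfl | ⟨t, ht, rfl⟩
    · exact absurd hp (hasymm _ haO _ hnO (hterm _ a ha))
    · refine ⟨t, ht, rfl, fun e => ?_, fun e => ?_⟩
      · subst e; exact hirr _ haO hp
      · subst e; exact hasymm _ haO _ hsO has hp
  have hsa : s ≠ a := fun e => hirr _ haO (e ▸ has)
  refine ⟨haO, y, hyO, hya, fun z hz hp => ?_⟩
  obtain ⟨t, ht, rfl, hta, hts⟩ := hbetter y hyO hya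
  obtain ⟨r, hrT, rfl, hra, hrs⟩ := hbetter z hz hp
  by_contra hrt
  have hrt' : r ≠ t := fun e => hrt (e ▸ rfl)
  -- otherwise `a`, `s`, `t`, `r` are four terminals
  have hsub : (({a, s, t, r} : Finset V) : Set V) ⊆ {x | Γ.Terminal x} := by
    intro x hx
    simp only [Finset.coe_insert, Finset.coe_singleton, Set.mem_insert_iff,
      Set.mem_singleton_iff] at hx
    rcases hx with rfl | rfl | rfl | rfl <;> assumption
  have hle := Set.ncard_le_ncard hsub (Set.toFinite _)
  rw [Set.ncard_coe_finset, hT3,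
    Finset.card_insert_of_notMem (by simp [hsa.symm, hta.symm, hra.symm]),
    Finset.card_insert_of_notMem (by simp [hts.symm, hrs.symm]),
    Finset.card_pair hrt'.symm] at hle
  omega
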